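/- Assume σ1 = τ1, σ2 ≠ τ2, and Res_x(h1, h1′) ≠ 0. Then h1 (a quadratic) has exactly 2 distinct roots ξ1, ξ2 in k, the singular points of the form (x:0:1) are exactly (ξ1:0:1) and (ξ2:0:1), and Sing = {(0:1:0), (1:0:0), (ξ1:0:1), (ξ2:0:1)} has exactly 4 elements. -/

import Mathlib

open MvPolynomial

/-!
In the affine chart, Euler's identity makes the last partial derivative of `F` redundant. At a
singular zero of `y⁴ - 2 (φ + ψ) y² + (φ - ψ)²` with `y ≠ 0` one gets `y² = φ + ψ` and `φ ψ = 0`,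
and then a common zero of one of `φ`, `ψ` and its derivative, which separability forbids. So `y = 0`
and `φ = ψ`, which is a quadratic equation with nonzero discriminant.

On the line at infinity `z = 0` only `F` modulo `z²` matters, that is the two top homogeneous
components of the affine equation. These come from `-2 (φ + ψ) y²` alone, since
`deg (φ - ψ) ≤ deg (φ + ψ) / 2`, and they are divisible by `x² y²`. This makes the two points with
`x y = 0` singular, and the leading coefficient shows that `F` is nonzero at all others.
-/

open scoped LinearAlgebra.Projectivization

section Dehomogenization

variable {R : Type*} [CommSemiring R] {n d : ℕ}

/-- Dehomogenization with respect to the last variable, which is set equal to `1`. It restricts a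
form on projective space to the affine chart where the last coordinate does not vanish. -/
noncomputable def dehomogenize : MvPolynomial (Fin (n + 1)) R →ₐ[R] MvPolynomial (Fin n) R :=
  aeval (Fin.snoc X 1 : Fin (n + 1) → MvPolynomial (Fin n) R)

@[simp]
lemma dehomogenize_X_castSucc (i : Fin n) :
    dehomogenize (X i.castSucc : MvPolynomial (Fin (n + 1)) R) = X i := by
  simp [dehomogenize]

@[simp]
lemma dehomogenize_X_last :
    dehomogenize (X (Fin.last n) : MvPolynomial (Fin (n + 1)) R) = 1 := by
  simp [dehomogenize]

@[simp]
lemma dehomogenize_C (a : R) : dehomogenize (C a : MvPolynomial (Fin (n + 1)) R) = C a :=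
  dehomogenize.commutes a

lemma eval_dehomogenize (v : Fin n → R) (F : MvPolynomial (Fin (n + 1)) R) :
    eval v (dehomogenize F) = eval (Fin.snoc v 1 : Fin (n + 1) → R) F := by
  induction F using MvPolynomial.induction_on with
  | C a => simp [dehomogenize]
  | add p q hp hq => simp only [map_add, hp, hq]
  | mul_X p i hp =>
    rw [map_mul, map_mul, map_mul, hp]
    cases i using Fin.lastCases <;> simp

lemma pderiv_dehomogenize (i : Fin n) (F : MvPolynomial (Fin (n + 1)) R) :
    pderiv i (dehomogenize F) = dehomogenize (pderiv i.castSucc F) := by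
  induction F using MvPolynomial.induction_on with
  | C a => simp [dehomogenize]
  | add p q hp hq => simp only [map_add, hp, hq]
  | mul_X p j hp =>
    simp only [map_mul, Derivation.leibniz, smul_eq_mul, hp, map_add]
    cases j using Fin.lastCases with
    | last => simp [pderiv_X_of_ne (Fin.castSucc_ne_last i).symm]
    | cast j => simp [pderiv_X, Pi.single_apply, apply_ite dehomogenize]

lemma dehomogenize_monomial (m : Fin (n + 1) →₀ ℕ) (a : R) :
    dehomogenize (monomial m a) =
      monomial (m.comapDomain Fin.castSucc (Fin.castSucc_injective n).injOn) a := by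
  simp only [dehomogenize, aeval_monomial, algebraMap_eq]
  rw [monomial_eq, Finsupp.prod_fintype _ _ (by simp), Finsupp.prod_fintype _ _ (by simp),
    Fin.prod_univ_castSucc]
  simp

lemma degree_eq_degree_comapDomain_castSucc_add (m : Fin (n + 1) →₀ ℕ) :
    m.degree =
      (m.comapDomain Fin.castSucc (Fin.castSucc_injective n).injOn).degree + m (Fin.last n) := by
  simp [Finsupp.degree_eq_sum, Fin.sum_univ_castSucc]

lemma coeff_dehomogenize {F : MvPolynomial (Fin (n + 1)) R} (hF : F.IsHomogeneous d)
    {m : Fin (n + 1) →₀ ℕ} (hm : m.degree = d) :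
    coeff (m.comapDomain Fin.castSucc (Fin.castSucc_injective n).injOn) (dehomogenize F) =
      coeff m F := by
  classical
  conv_lhs => rw [F.as_sum, map_sum]
  simp only [dehomogenize_monomial, coeff_sum, coeff_monomial]
  rw [Finset.sum_eq_single m _ (by simp +contextual)]
  · simp
  · intro m' hm' hne
    refine if_neg fun h => hne ?_
    have hlast : m' (Fin.last n) = m (Fin.last n) := by
      have hdeg : m'.degree = m.degree := hm.symm ▸ (hF.degree_eq_sum_deg_support hm').symm
      rwa [degree_eq_degree_comapDomain_castSucc_add m', h,
        degree_eq_degree_comapDomain_castSucc_add m, add_right_inj] at hdeg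
    ext i
    cases i using Fin.lastCases with
    | last => exact hlast
    | cast i => exact DFunLike.congr_fun h i

lemma X_last_pow_dvd_of_totalDegree_dehomogenize_add_le {F : MvPolynomial (Fin (n + 1)) R} {j : ℕ}
    (hF : F.IsHomogeneous d) (hj : (dehomogenize F).totalDegree + j ≤ d) :
    X (Fin.last n) ^ j ∣ F := by
  rw [F.as_sum]
  refine Finset.dvd_sum fun m hm => ?_
  have hmd : m.degree = d := (hF.degree_eq_sum_deg_support hm).symm
  have hle := le_totalDegree
    (mem_support_iff.2 ((coeff_dehomogenize hF hmd).trans_ne (mem_support_iff.1 hm)))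
  rw [X_pow_eq_monomial, monomial_dvd_monomial]
  refine ⟨Or.inr ?_, one_dvd _⟩
  rw [Finsupp.single_le_iff]
  rw [Finsupp.sum_fintype _ _ fun _ => rfl, ← Finsupp.degree_eq_sum] at hle
  have := degree_eq_degree_comapDomain_castSucc_add m
  lia

end Dehomogenization

section SingularZeros

variable {R σ : Type*} [CommSemiring R] {d : ℕ}

/-- `v` is a singular zero of `F`: the polynomial and all of its partial derivatives vanish there.
For a form `F`, this depends only on the line through `v`. -/
def IsSingularZero (F : MvPolynomial σ R) (v : σ → R) : Prop :=
  eval v F = 0 ∧ ∀ i, eval v (pderiv i F) = 0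

lemma isSingularZero_sq_mul_add_sq_mul {A B : MvPolynomial σ R} {v : σ → R}
    (hA : eval v A = 0) (hB : eval v B = 0) (S T : MvPolynomial σ R) :
    IsSingularZero (A ^ 2 * S + B ^ 2 * T) v := by
  simp [IsSingularZero, Derivation.leibniz, Derivation.leibniz_pow, hA, hB]

lemma eval_smul_of_isHomogeneous {F : MvPolynomial σ R} (hF : F.IsHomogeneous d) (a : R)
    (v : σ → R) : eval (a • v) F = a ^ d * eval v F := by
  rw [eval_eq, eval_eq, Finset.mul_sum]
  refine Finset.sum_congr rfl fun m hm => ?_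
  simp only [Pi.smul_apply, smul_eq_mul, mul_pow, Finset.prod_mul_distrib,
    Finset.prod_pow_eq_pow_sum, hF.degree_eq_sum_deg_support hm]
  exact mul_left_comm ..

lemma isSingularZero_unit_smul_iff {F : MvPolynomial σ R} (hF : F.IsHomogeneous d) (a : Rˣ)
    (v : σ → R) : IsSingularZero F (a • v) ↔ IsSingularZero F v := by
  simp [IsSingularZero, Units.smul_def, eval_smul_of_isHomogeneous hF,
    eval_smul_of_isHomogeneous hF.pderiv, (a.isUnit.pow _).mul_right_eq_zero]

-- Euler's identity accounts for the derivative in the last variable.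
lemma isSingularZero_snoc_one_iff {n : ℕ} {F : MvPolynomial (Fin (n + 1)) R}
    (hF : F.IsHomogeneous d) (v : Fin n → R) :
    IsSingularZero F (Fin.snoc v 1 : Fin (n + 1) → R) ↔ IsSingularZero (dehomogenize F) v := by
  have euler := congrArg (eval (Fin.snoc v 1 : Fin (n + 1) → R)) hF.sum_X_mul_pderiv
  simp only [Fin.sum_univ_castSucc, map_add, map_sum, map_mul, eval_X, Fin.snoc_castSucc,
    Fin.snoc_last, one_mul, map_nsmul] at euler
  simp only [IsSingularZero, Fin.forall_fin_succ', eval_dehomogenize, pderiv_dehomogenize]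
  refine and_congr_right fun h0 => and_iff_left_of_imp fun hi => ?_
  simpa [h0, hi] using euler

variable {k : Type*} [Field k]

/-- The singular locus of the projective hypersurface `F = 0`. Membership is tested on the chosen
representative of a point, which is harmless when `F` is homogeneous. -/
def singularLocus (F : MvPolynomial σ k) : Set (ℙ k (σ → k)) :=
  {P | IsSingularZero F P.rep}

lemma mk_mem_singularLocus_iff {F : MvPolynomial σ k} (hF : F.IsHomogeneous d) {v : σ → k}
    (hv : v ≠ 0) : Projectivization.mk k v hv ∈ singularLocus F ↔ IsSingularZero F v := by
  obtain ⟨a, ha⟩ := Projectivization.exists_smul_eq_mk_rep k v hv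
  rw [singularLocus, Set.mem_ofPred_eq, ← ha, isSingularZero_unit_smul_iff hF]

end SingularZeros

section ProjectivePlane

variable {k : Type*} [Field k]

lemma exists_eq_mk_snoc_one_or_eq_mk_snoc_zero {n : ℕ} (P : ℙ k (Fin (n + 1) → k)) :
    ∃ v : Fin n → k, (∃ hv, P = .mk k (Fin.snoc v 1) hv) ∨ ∃ hv, P = .mk k (Fin.snoc v 0) hv := by
  induction P using Projectivization.ind with
  | h v hv =>
  by_cases hz : v (Fin.last n) = 0
  · refine ⟨Fin.init v, .inr ?_⟩
    rw [← hz]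
    simp [hv]
  · refine ⟨(v (Fin.last n))⁻¹ • Fin.init v, .inl ⟨fun h => ?_, ?_⟩⟩
    · simpa using congrFun h (Fin.last n)
    · rw [Projectivization.mk_eq_mk_iff']
      refine ⟨v (Fin.last n), funext fun i => ?_⟩
      cases i using Fin.lastCases <;> simp [Fin.init, hz]

lemma snoc_eq_vec3 {α : Type*} (v : Fin 2 → α) (z : α) :
    (Fin.snoc v z : Fin 3 → α) = ![v 0, v 1, z] := by
  ext i
  fin_cases i <;> rfl

lemma dehomogenize_eq_aeval_vec3 {R : Type*} [CommSemiring R] (F : MvPolynomial (Fin 3) R) :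
    dehomogenize F = aeval ![(X 0 : MvPolynomial (Fin 2) R), X 1, 1] F := by
  rw [dehomogenize, ← snoc_eq_vec3 X 1]

lemma mk_vec3_eq_mk_vec3_iff {x y z x' y' z' : k} (h h') :
    Projectivization.mk k ![x, y, z] h = .mk k ![x', y', z'] h' ↔
      y * z' = z * y' ∧ x * z' = z * x' ∧ x * y' = y * x' := by
  rw [Projectivization.mk_eq_mk_iff_crossProduct_eq_zero, cross_apply]
  simp [sub_eq_zero, eq_comm (a := z * x')]

lemma ncard_two_at_infinity_two_affine {ξ₁ ξ₂ : k} (hξ : ξ₁ ≠ ξ₂) :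
    ({.mk k ![0, 1, 0] (by simp), .mk k ![1, 0, 0] (by simp), .mk k ![ξ₁, 0, 1] (by simp),
      .mk k ![ξ₂, 0, 1] (by simp)} : Set (ℙ k (Fin 3 → k))).ncard = 4 := by
  refine Set.ncard_eq_four.2 ⟨_, _, _, _, ?_, ?_, ?_, ?_, ?_, ?_, rfl⟩ <;>
    simp [mk_vec3_eq_mk_vec3_iff, hξ]

end ProjectivePlane

section ToMvPolynomial

variable {R σ : Type*} [CommSemiring R]

lemma pderiv_toMvPolynomial_self (p : Polynomial R) (i : σ) :
    pderiv i (p.toMvPolynomial i) = p.derivative.toMvPolynomial i := by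
  simp [Polynomial.toMvPolynomial]

lemma pderiv_toMvPolynomial_of_ne (p : Polynomial R) {i j : σ} (h : j ≠ i) :
    pderiv i (p.toMvPolynomial j) = 0 := by
  simp [Polynomial.toMvPolynomial, pderiv_X_of_ne h]

lemma totalDegree_toMvPolynomial_le (p : Polynomial R) (i : σ) :
    (p.toMvPolynomial i).totalDegree ≤ p.natDegree := by
  rw [Polynomial.toMvPolynomial, Polynomial.aeval_eq_sum_range]
  refine totalDegree_finsetSum_le fun j hj => ?_
  rw [smul_eq_C_mul, X_pow_eq_monomial, C_mul_monomial]
  exact (totalDegree_monomial_le _ _).trans (by simpa [Nat.lt_succ_iff] using hj)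

end ToMvPolynomial

section Polynomials

variable {R k σ : Type*} [CommRing R] [Field k]

lemma det_sylvester_quadratic_derivative (a b c : R) :
    Matrix.det !![a, b, c; 2 * a, b, 0; 0, 2 * a, b] = -a * discrim a b c := by
  rw [Matrix.det_fin_three, discrim]
  simp
  ring

lemma exists_ne_forall_quadratic_eq_zero_iff [IsSepClosed k] [NeZero (2 : k)] {a b c : k}
    (ha : a ≠ 0) (hdisc : discrim a b c ≠ 0) :
    ∃ x₁ x₂, x₁ ≠ x₂ ∧ ∀ x, a * (x * x) + b * x + c = 0 ↔ x = x₁ ∨ x = x₂ := by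
  obtain ⟨s, hs⟩ := IsSepClosed.exists_eq_mul_self (discrim a b c)
  refine ⟨(-b + s) / (2 * a), (-b - s) / (2 * a), fun h => hdisc ?_, quadratic_eq_zero_iff ha hs⟩
  have hs0 : 2 * s = 0 := by
    linear_combination (div_left_inj' (mul_ne_zero two_ne_zero ha)).1 h
  simp [hs, (mul_eq_zero.1 hs0).resolve_left two_ne_zero]

lemma exists_eq_add_C_mul_X_pow_add_C_mul_X_pow {R : Type*} [Semiring R]
    {p : Polynomial R} {n : ℕ}
    (hp : p.natDegree ≤ n + 2) :
    ∃ r : Polynomial R, r.natDegree ≤ n ∧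
      p = r + Polynomial.C (p.coeff (n + 1)) * .X ^ (n + 1) +
        Polynomial.C (p.coeff (n + 2)) * .X ^ (n + 2) := by
  refine ⟨∑ i ∈ Finset.range (n + 1), Polynomial.C (p.coeff i) * .X ^ i,
    Polynomial.natDegree_sum_le_of_forall_le _ _ fun i hi => ?_, ?_⟩
  · exact (Polynomial.natDegree_C_mul_X_pow_le ..).trans (Nat.lt_succ_iff.1 (Finset.mem_range.1 hi))
  · rw [← Finset.sum_range_succ, ← Finset.sum_range_succ]
    exact p.as_sum_range_C_mul_X_pow' (Nat.lt_succ_of_le hp)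

lemma nodal_vec4 (a₁ a₂ a₃ a₄ : R) :
    Lagrange.nodal Finset.univ ![a₁, a₂, a₃, a₄] =
      .X ^ 4 - Polynomial.C (a₁ + a₂ + a₃ + a₄) * .X ^ 3 +
      Polynomial.C (a₁ * a₂ + a₁ * a₃ + a₁ * a₄ + a₂ * a₃ + a₂ * a₄ + a₃ * a₄) * .X ^ 2 -
      Polynomial.C (a₁ * a₂ * a₃ + a₁ * a₂ * a₄ + a₁ * a₃ * a₄ + a₂ * a₃ * a₄) * .X +
      Polynomial.C (a₁ * a₂ * a₃ * a₄) := by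
  simp only [Lagrange.nodal, Fin.prod_univ_four, Matrix.cons_val, map_add, map_mul]
  ring

lemma toMvPolynomial_nodal_vec4 (i : σ) (a₁ a₂ a₃ a₄ : R) :
    (Lagrange.nodal Finset.univ ![a₁, a₂, a₃, a₄]).toMvPolynomial i =
      (X i - C a₁) * (X i - C a₂) * (X i - C a₃) * (X i - C a₄) := by
  simp [Lagrange.nodal, Fin.prod_univ_four]

lemma natDegree_nodal_add_nodal {ι : Type*} (h2 : (2 : R) ≠ 0) (s : Finset ι) (v w : ι → R) :
    (Lagrange.nodal s v + Lagrange.nodal s w).natDegree = s.card := by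
  have := nontrivial_of_ne _ _ h2
  have hv := Lagrange.natDegree_nodal (s := s) (v := v)
  have hw := Lagrange.natDegree_nodal (s := s) (v := w)
  refine Polynomial.natDegree_eq_of_le_of_coeff_ne_zero
    (Polynomial.natDegree_add_le_of_degree_le hv.le hw.le) ?_
  have hcv : (Lagrange.nodal s v).coeff s.card = 1 := hv ▸ Lagrange.nodal_monic.coeff_natDegree
  have hcw : (Lagrange.nodal s w).coeff s.card = 1 := hw ▸ Lagrange.nodal_monic.coeff_natDegree
  rwa [Polynomial.coeff_add, hcv, hcw, one_add_one_eq_two]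

lemma separable_nodal_vec4 {a₁ a₂ a₃ a₄ : k}
    (h : [a₁, a₂, a₃, a₄].Pairwise (· ≠ ·)) :
    (Lagrange.nodal Finset.univ ![a₁, a₂, a₃, a₄]).Separable := by
  refine Polynomial.separable_prod_X_sub_C_iff.2 (List.nodup_ofFn.1 ?_)
  simpa [List.Nodup] using h

end Polynomials

section Biquadratic

variable {R : Type*} [CommRing R]

/-- The polynomial `y⁴ - 2 (φ(x) + ψ(x)) y² + (φ(x) - ψ(x))²`, whose roots in `y` are
`± √φ(x) ± √ψ(x)`, with `x` and `y` encoded as the variables `0` and `1`. -/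
noncomputable def biquadratic (φ ψ : Polynomial R) : MvPolynomial (Fin 2) R :=
  X 1 ^ 4 - C 2 * (φ.toMvPolynomial 0 + ψ.toMvPolynomial 0) * X 1 ^ 2 +
    (φ.toMvPolynomial 0 - ψ.toMvPolynomial 0) ^ 2

lemma eval_biquadratic (φ ψ : Polynomial R) (x y : R) :
    eval ![x, y] (biquadratic φ ψ) =
      y ^ 4 - 2 * (φ.eval x + ψ.eval x) * y ^ 2 + (φ.eval x - ψ.eval x) ^ 2 := by
  simp [biquadratic]

lemma eval_pderiv_zero_biquadratic (φ ψ : Polynomial R) (x y : R) :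
    eval ![x, y] (pderiv 0 (biquadratic φ ψ)) =
      2 * (φ.eval x - ψ.eval x) * (φ.derivative.eval x - ψ.derivative.eval x) -
        2 * (φ.derivative.eval x + ψ.derivative.eval x) * y ^ 2 := by
  simp [biquadratic, Derivation.leibniz, Derivation.leibniz_pow, pderiv_toMvPolynomial_self]
  ring

lemma eval_pderiv_one_biquadratic (φ ψ : Polynomial R) (x y : R) :
    eval ![x, y] (pderiv 1 (biquadratic φ ψ)) =
      4 * y * (y ^ 2 - (φ.eval x + ψ.eval x)) := by
  simp [biquadratic, Derivation.leibniz, Derivation.leibniz_pow, pderiv_toMvPolynomial_of_ne]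
  ring

lemma totalDegree_pow_four_sub_mul_sq_add_sq_le {r s : Polynomial R} {d : ℕ} (hd : 4 ≤ d)
    (hr : r.natDegree + 2 ≤ d) (hs : 2 * s.natDegree ≤ d) :
    (X 1 ^ 4 - C 2 * r.toMvPolynomial 0 * X 1 ^ 2 + s.toMvPolynomial 0 ^ 2 :
      MvPolynomial (Fin 2) R).totalDegree ≤ d := by
  have hX (j : ℕ) : (X 1 ^ j : MvPolynomial (Fin 2) R).totalDegree ≤ j :=
    (isHomogeneous_X_pow 1 j).totalDegree_le
  have hCr : (C 2 * r.toMvPolynomial 0 : MvPolynomial (Fin 2) R).totalDegree ≤ r.natDegree := by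
    rw [← smul_eq_C_mul]
    exact (totalDegree_smul_le ..).trans (totalDegree_toMvPolynomial_le r 0)
  refine (totalDegree_add ..).trans (max_le ((totalDegree_sub ..).trans (max_le ?_ ?_)) ?_)
  · exact (hX 4).trans hd
  · exact ((totalDegree_mul ..).trans (add_le_add hCr (hX 2))).trans hr
  · exact (totalDegree_pow ..).trans
      ((Nat.mul_le_mul_left 2 (totalDegree_toMvPolynomial_le s 0)).trans hs)

lemma exists_eq_sq_mul_add_X_last_sq_mul {φ ψ : Polynomial R} {n : ℕ}
    (hadd : (φ + ψ).natDegree ≤ n + 4) (hsub : 2 * (φ - ψ).natDegree ≤ n + 4)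
    {F : MvPolynomial (Fin 3) R} (hF : F.IsHomogeneous (n + 6))
    (hFd : dehomogenize F = biquadratic φ ψ) :
    ∃ T, F = (X 0 * X 1) ^ 2 * (-C 2 * (C ((φ + ψ).coeff (n + 4)) * X 0 ^ (n + 2) +
      C ((φ + ψ).coeff (n + 3)) * (X 0 ^ (n + 1) * X 2))) + X 2 ^ 2 * T := by
  obtain ⟨r, hr, hφψ⟩ := exists_eq_add_C_mul_X_pow_add_C_mul_X_pow (n := n + 2) hadd
  set a := (φ + ψ).coeff (n + 4)
  set b := (φ + ψ).coeff (n + 3)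
  set top : MvPolynomial (Fin 3) R :=
    (X 0 * X 1) ^ 2 * (-C 2 * (C a * X 0 ^ (n + 2) + C b * (X 0 ^ (n + 1) * X 2)))
  have htop : top.IsHomogeneous (n + 6) := by
    have hX (i : Fin 3) (j : ℕ) : (X i ^ j : MvPolynomial (Fin 3) R).IsHomogeneous j :=
      isHomogeneous_X_pow i j
    have hS := (((hX 0 (n + 2)).C_mul a).add
      (((hX 0 (n + 1)).mul (isHomogeneous_X R 2)).C_mul b)).C_mul (-2)
    convert (((isHomogeneous_X R 0).mul (isHomogeneous_X R 1)).pow 2).mul hS using 1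
    · simp [top]
    · lia
  have hd : dehomogenize (F - top) = X 1 ^ 4 - C 2 * r.toMvPolynomial 0 * X 1 ^ 2 +
      (φ - ψ).toMvPolynomial 0 ^ 2 := by
    have h0 : dehomogenize (X 0 : MvPolynomial (Fin 3) R) = X 0 := dehomogenize_X_castSucc 0
    have h1 : dehomogenize (X 1 : MvPolynomial (Fin 3) R) = X 1 := dehomogenize_X_castSucc 1
    have h2 : dehomogenize (X 2 : MvPolynomial (Fin 3) R) = 1 := dehomogenize_X_last
    have h := congrArg (Polynomial.toMvPolynomial (0 : Fin 2)) hφψ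
    simp only [map_add, map_mul, map_pow, Polynomial.toMvPolynomial_C,
      Polynomial.toMvPolynomial_X] at h
    simp only [top, hFd, biquadratic, map_add, map_sub, map_mul, map_pow, map_neg, h0, h1, h2,
      dehomogenize_C]
    linear_combination -C 2 * X 1 ^ 2 * h
  obtain ⟨T, hT⟩ := X_last_pow_dvd_of_totalDegree_dehomogenize_add_le (hF.sub htop) (j := 2)
    (hd ▸ Nat.add_le_add_right (totalDegree_pow_four_sub_mul_sq_add_sq_le (by lia) (by lia) hsub) 2)
  exact ⟨T, sub_eq_iff_eq_add'.1 hT⟩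

variable {k : Type*} [Field k] {φ ψ : Polynomial k}

lemma snd_eq_zero_of_isSingularZero_biquadratic (h2 : (2 : k) ≠ 0)
    (hφ : φ.Separable) (hψ : ψ.Separable) {x y : k}
    (h : IsSingularZero (biquadratic φ ψ) ![x, y]) : y = 0 := by
  have h4 : (4 : k) ≠ 0 := by
    rw [← two_add_two_eq_four, ← two_mul]
    exact mul_ne_zero h2 h2
  have hf := h.1
  have hfx := h.2 0
  have hfy := h.2 1
  rw [eval_biquadratic] at hf
  rw [eval_pderiv_zero_biquadratic] at hfx
  rw [eval_pderiv_one_biquadratic] at hfy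
  by_contra hy
  have hy2 : y ^ 2 = φ.eval x + ψ.eval x :=
    sub_eq_zero.1 ((mul_eq_zero.1 hfy).resolve_left (mul_ne_zero h4 hy))
  have hmul : φ.eval x * ψ.eval x = 0 := by
    refine (mul_eq_zero.1 ?_).resolve_left h4
    linear_combination (-1) * hf + (y ^ 2 - (φ.eval x + ψ.eval x)) * hy2
  have hadd : φ.eval x + ψ.eval x ≠ 0 := hy2 ▸ pow_ne_zero 2 hy
  have hcross : φ.eval x * ψ.derivative.eval x + ψ.eval x * φ.derivative.eval x = 0 := by
    refine (mul_eq_zero.1 ?_).resolve_left h4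
    linear_combination (-1) * hfx - 2 * (φ.derivative.eval x + ψ.derivative.eval x) * hy2
  rcases mul_eq_zero.1 hmul with h0 | h0
  · rw [h0, zero_add] at hadd
    rw [h0, zero_mul, zero_add] at hcross
    exact mul_ne_zero hadd (hφ.eval₂_derivative_ne_zero (RingHom.id k) h0) hcross
  · rw [h0, add_zero] at hadd
    rw [h0, zero_mul, add_zero] at hcross
    exact mul_ne_zero hadd (hψ.eval₂_derivative_ne_zero (RingHom.id k) h0) hcross

lemma isSingularZero_biquadratic_iff (h2 : (2 : k) ≠ 0) (hφ : φ.Separable) (hψ : ψ.Separable)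
    (x y : k) :
    IsSingularZero (biquadratic φ ψ) ![x, y] ↔ y = 0 ∧ φ.eval x = ψ.eval x := by
  constructor
  · intro h
    obtain rfl := snd_eq_zero_of_isSingularZero_biquadratic h2 hφ hψ h
    simpa [eval_biquadratic, sub_eq_zero] using h.1
  · rintro ⟨rfl, h⟩
    simp [IsSingularZero, Fin.forall_fin_two, eval_biquadratic, eval_pderiv_zero_biquadratic,
      eval_pderiv_one_biquadratic, h]

lemma isSingularZero_infinity_iff_of_dehomogenize_eq_biquadratic (h2 : (2 : k) ≠ 0) {n : ℕ}
    (hadd : (φ + ψ).natDegree = n + 4) (hsub : 2 * (φ - ψ).natDegree ≤ n + 4)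
    {F : MvPolynomial (Fin 3) k} (hF : F.IsHomogeneous (n + 6))
    (hFd : dehomogenize F = biquadratic φ ψ) (x y : k) :
    IsSingularZero F ![x, y, 0] ↔ x = 0 ∨ y = 0 := by
  obtain ⟨T, rfl⟩ := exists_eq_sq_mul_add_X_last_sq_mul hadd.le hsub hF hFd
  refine ⟨fun h => ?_, fun h => isSingularZero_sq_mul_add_sq_mul ?_ ?_ _ T⟩
  · have hlead : (φ + ψ).coeff (n + 4) ≠ 0 := by
      rw [← hadd, Polynomial.coeff_natDegree, Polynomial.leadingCoeff_ne_zero]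
      intro h0
      simp [h0] at hadd
    by_contra! hxy
    simpa [-Polynomial.coeff_add, h2, hlead, hxy] using h.1
  · simpa using h
  · simp

theorem mem_singularLocus_iff_of_dehomogenize_eq_biquadratic (h2 : (2 : k) ≠ 0) {n : ℕ}
    (hφ : φ.Separable) (hψ : ψ.Separable) (hadd : (φ + ψ).natDegree = n + 4)
    (hsub : 2 * (φ - ψ).natDegree ≤ n + 4) {F : MvPolynomial (Fin 3) k}
    (hF : F.IsHomogeneous (n + 6)) (hFd : dehomogenize F = biquadratic φ ψ) (P : ℙ k (Fin 3 → k)) :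
    P ∈ singularLocus F ↔ P = .mk k ![0, 1, 0] (by simp) ∨ P = .mk k ![1, 0, 0] (by simp) ∨
      ∃ x, φ.eval x = ψ.eval x ∧ P = .mk k ![x, 0, 1] (by simp) := by
  have haff (x y : k) : IsSingularZero F ![x, y, 1] ↔ y = 0 ∧ φ.eval x = ψ.eval x := by
    have hsnoc : Fin.snoc ![x, y] 1 = (![x, y, 1] : Fin 3 → k) := snoc_eq_vec3 ![x, y] 1
    rw [← hsnoc, isSingularZero_snoc_one_iff hF, hFd, isSingularZero_biquadratic_iff h2 hφ hψ]
  have hinf :=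
    isSingularZero_infinity_iff_of_dehomogenize_eq_biquadratic h2 hadd hsub hF hFd
  constructor
  · intro hP
    obtain ⟨v, ⟨hv, rfl⟩ | ⟨hv, rfl⟩⟩ := exists_eq_mk_snoc_one_or_eq_mk_snoc_zero P
    · have h := (mk_mem_singularLocus_iff hF hv).1 hP
      simp only [snoc_eq_vec3] at h ⊢
      obtain ⟨hy, hx⟩ := (haff _ _).1 h
      exact .inr (.inr ⟨v 0, hx, by simp only [hy]⟩)
    · have h := (mk_mem_singularLocus_iff hF hv).1 hP
      simp only [snoc_eq_vec3] at h ⊢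
      simp only [Projectivization.mk_eq_mk_iff']
      rcases (hinf _ _).1 h with h | h
      · exact .inl ⟨v 1, by simp [h]⟩
      · exact .inr (.inl ⟨v 0, by simp [h]⟩)
  · rintro (rfl | rfl | ⟨x, hx, rfl⟩)
    · exact (mk_mem_singularLocus_iff hF _).2 ((hinf 0 1).2 (.inl rfl))
    · exact (mk_mem_singularLocus_iff hF _).2 ((hinf 1 0).2 (.inr rfl))
    · exact (mk_mem_singularLocus_iff hF _).2 ((haff x 0).2 ⟨rfl, hx⟩)

end Biquadratic

lemma two_ne_zero_of_charP {R : Type*} [AddMonoidWithOne R] (p : ℕ) [CharP R p]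
    (hp : p = 0 ∨ 5 ≤ p) : (2 : R) ≠ 0 := by
  rw [← Nat.cast_ofNat, Ne, CharP.cast_eq_zero_iff R p]
  rcases hp with rfl | hp
  · simp
  · exact Nat.not_dvd_of_pos_of_lt two_pos (by lia)

theorem exists_singularLocus_eq_of_sub_eq_quadratic {k : Type*} [Field k] [IsSepClosed k]
    [NeZero (2 : k)] {φ ψ : Polynomial k} {n : ℕ}
    (hφ : φ.Separable) (hψ : ψ.Separable) (hadd : (φ + ψ).natDegree = n + 4) {a b c : k}
    (hsub : ψ - φ = Polynomial.C a * .X ^ 2 + Polynomial.C b * .X + Polynomial.C c)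
    (ha : a ≠ 0) (hdisc : discrim a b c ≠ 0) {F : MvPolynomial (Fin 3) k}
    (hF : F.IsHomogeneous (n + 6)) (hFd : dehomogenize F = biquadratic φ ψ) :
    ∃ ξ₁ ξ₂, ξ₁ ≠ ξ₂ ∧ (∀ x, φ.eval x = ψ.eval x ↔ x = ξ₁ ∨ x = ξ₂) ∧
      singularLocus F = {.mk k ![0, 1, 0] (by simp), .mk k ![1, 0, 0] (by simp),
        .mk k ![ξ₁, 0, 1] (by simp), .mk k ![ξ₂, 0, 1] (by simp)} := by
  obtain ⟨ξ₁, ξ₂, hξ, hroots⟩ := exists_ne_forall_quadratic_eq_zero_iff ha hdisc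
  have heq (x : k) : φ.eval x = ψ.eval x ↔ x = ξ₁ ∨ x = ξ₂ := by
    rw [← hroots, eq_comm, ← sub_eq_zero, ← Polynomial.eval_sub, hsub]
    simp [sq]
  have hdeg : 2 * (φ - ψ).natDegree ≤ n + 4 := by
    rw [Polynomial.natDegree_sub, hsub]
    have := Polynomial.natDegree_quadratic_le (a := a) (b := b) (c := c)
    lia
  refine ⟨ξ₁, ξ₂, hξ, heq, Set.ext fun P => ?_⟩
  rw [mem_singularLocus_iff_of_dehomogenize_eq_biquadratic two_ne_zero hφ hψ hadd hdeg hF hFd]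
  simp [heq, or_and_right, exists_or]

theorem stmt_15_general
    {k : Type*} [Field k] [IsSepClosed k]
    [NeZero (2 : k)]
    (α1 α2 α3 α4 β1 β2 β3 β4 : k)
    (hα : ([α1, α2, α3, α4] : List k).Pairwise (· ≠ ·))
    (hβ : ([β1, β2, β3, β4] : List k).Pairwise (· ≠ ·))
    (σ1 σ2 σ3 σ4 τ1 τ2 τ3 τ4 : k)
    (hσ1 : σ1 = α1 + α2 + α3 + α4)
    (hσ2 : σ2 = α1 * α2 + α1 * α3 + α1 * α4 + α2 * α3 + α2 * α4 + α3 * α4)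
    (hσ3 : σ3 = α1 * α2 * α3 + α1 * α2 * α4 + α1 * α3 * α4 + α2 * α3 * α4)
    (hσ4 : σ4 = α1 * α2 * α3 * α4)
    (hτ1 : τ1 = β1 + β2 + β3 + β4)
    (hτ2 : τ2 = β1 * β2 + β1 * β3 + β1 * β4 + β2 * β3 + β2 * β4 + β3 * β4)
    (hτ3 : τ3 = β1 * β2 * β3 + β1 * β2 * β4 + β1 * β3 * β4 + β2 * β3 * β4)
    (hτ4 : τ4 = β1 * β2 * β3 * β4)
    (φ1 φ2 f : MvPolynomial (Fin 2) k)
    (hφ1 : φ1 = (X 0 - C α1) * (X 0 - C α2) * (X 0 - C α3) * (X 0 - C α4))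
    (hφ2 : φ2 = (X 0 - C β1) * (X 0 - C β2) * (X 0 - C β3) * (X 0 - C β4))
    (hf : f = X 1 ^ 4 - C 2 * (φ1 + φ2) * X 1 ^ 2 + (φ1 - φ2) ^ 2)
    (F : MvPolynomial (Fin 3) k)
    (hFhom : F.IsHomogeneous 6)
    (hFf : aeval ![(X 0 : MvPolynomial (Fin 2) k), X 1, 1] F = f)
    (Sing : Set (Projectivization k (Fin 3 → k)))
    (hSing : ∀ P : Projectivization k (Fin 3 → k),
      P ∈ Sing ↔ (eval P.rep F = 0 ∧
        eval P.rep (pderiv 0 F) = 0 ∧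
        eval P.rep (pderiv 1 F) = 0 ∧
        eval P.rep (pderiv 2 F) = 0))
    (h1 : k → k)
    (hh1 : ∀ x : k, h1 x = (σ1 - τ1) * x ^ 3 - (σ2 - τ2) * x ^ 2 + (σ3 - τ3) * x - (σ4 - τ4))
    (resq : k)
    (hresq : resq = Matrix.det
      !![-(σ2 - τ2), σ3 - τ3, -(σ4 - τ4);
         -2 * (σ2 - τ2), σ3 - τ3, 0;
         0, -2 * (σ2 - τ2), σ3 - τ3])
    (hστ1 : σ1 = τ1) (hστ2 : σ2 ≠ τ2) (hrq : resq ≠ 0) :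
    ∃ ξ1 ξ2 : k, ξ1 ≠ ξ2
      ∧ (∀ x : k, h1 x = 0 ↔ x = ξ1 ∨ x = ξ2)
      ∧ (∀ ξ : k, Projectivization.mk k (![ξ, 0, 1] : Fin 3 → k)
            (by intro hc; simpa using congrFun hc 2) ∈ Sing
          ↔ ξ = ξ1 ∨ ξ = ξ2)
      ∧ Sing = {Projectivization.mk k (![0, 1, 0] : Fin 3 → k)
                  (by intro hc; simpa using congrFun hc 1),
                Projectivization.mk k (![1, 0, 0] : Fin 3 → k)
                  (by intro hc; simpa using congrFun hc 0),
                Projectivization.mk k (![ξ1, 0, 1] : Fin 3 → k)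
                  (by intro hc; simpa using congrFun hc 2),
                Projectivization.mk k (![ξ2, 0, 1] : Fin 3 → k)
                  (by intro hc; simpa using congrFun hc 2)}
      ∧ Sing.ncard = 4 := by
  set φ := Lagrange.nodal Finset.univ ![α1, α2, α3, α4] with hφ
  set ψ := Lagrange.nodal Finset.univ ![β1, β2, β3, β4] with hψ
  have hFd : dehomogenize F = biquadratic φ ψ := by
    rw [dehomogenize_eq_aeval_vec3, hFf, hf, hφ1, hφ2, biquadratic, toMvPolynomial_nodal_vec4,
      toMvPolynomial_nodal_vec4]
  have hsub : ψ - φ = Polynomial.C (-(σ2 - τ2)) * .X ^ 2 + Polynomial.C (σ3 - τ3) * .X +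
      Polynomial.C (-(σ4 - τ4)) := by
    rw [hφ, hψ, nodal_vec4, nodal_vec4, ← hσ1, ← hσ2, ← hσ3, ← hσ4, ← hτ1, ← hτ2, ← hτ3, ← hτ4,
      hστ1]
    simp only [map_neg, map_sub]
    ring
  have hh (x : k) : h1 x = ψ.eval x - φ.eval x := by
    rw [← Polynomial.eval_sub, hsub, hh1, hστ1]
    simp only [Polynomial.eval_add, Polynomial.eval_mul, Polynomial.eval_pow, Polynomial.eval_C,
      Polynomial.eval_X]
    ring
  have hdisc : discrim (-(σ2 - τ2)) (σ3 - τ3) (-(σ4 - τ4)) ≠ 0 := by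
    rw [hresq, neg_mul_comm, det_sylvester_quadratic_derivative] at hrq
    exact right_ne_zero_of_mul hrq
  obtain ⟨ξ1, ξ2, hξ, hroots, hlocus⟩ := exists_singularLocus_eq_of_sub_eq_quadratic (n := 0)
    (separable_nodal_vec4 hα) (separable_nodal_vec4 hβ)
    (natDegree_nodal_add_nodal two_ne_zero Finset.univ _ _) hsub
    (neg_ne_zero.2 (sub_ne_zero.2 hστ2)) hdisc hFhom hFd
  have hS : Sing = singularLocus F := by
    ext P
    simp [hSing, singularLocus, IsSingularZero, Fin.forall_fin_succ]
  rw [hS, hlocus]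
  refine ⟨ξ1, ξ2, hξ, fun x => ?_, fun ξ => ?_, rfl, ncard_two_at_infinity_two_affine hξ⟩
  · rw [hh, sub_eq_zero, eq_comm, hroots]
  · simp [mk_vec3_eq_mk_vec3_iff]

/-- Case (II-1): if σ1 = τ1, σ2 ≠ τ2 and Res_x(h1, h1') ≠ 0 (h1 now being a
quadratic), then h1 has exactly 2 distinct roots ξ1, ξ2, the singular points of
the form (x:0:1) are exactly (ξ1:0:1) and (ξ2:0:1), and
Sing = {(0:1:0), (1:0:0), (ξ1:0:1), (ξ2:0:1)} has exactly 4 elements. -/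
theorem stmt_15
    {k : Type*} [Field k] [IsAlgClosed k]
    (p : ℕ) [CharP k p] (hp : p = 0 ∨ 5 ≤ p)
    (α1 α2 α3 α4 β1 β2 β3 β4 : k)
    (hdist : ([α1, α2, α3, α4, β1, β2, β3, β4] : List k).Pairwise (· ≠ ·))
    (σ1 σ2 σ3 σ4 τ1 τ2 τ3 τ4 : k)
    (hσ1 : σ1 = α1 + α2 + α3 + α4)
    (hσ2 : σ2 = α1 * α2 + α1 * α3 + α1 * α4 + α2 * α3 + α2 * α4 + α3 * α4)
    (hσ3 : σ3 = α1 * α2 * α3 + α1 * α2 * α4 + α1 * α3 * α4 + α2 * α3 * α4)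
    (hσ4 : σ4 = α1 * α2 * α3 * α4)
    (hτ1 : τ1 = β1 + β2 + β3 + β4)
    (hτ2 : τ2 = β1 * β2 + β1 * β3 + β1 * β4 + β2 * β3 + β2 * β4 + β3 * β4)
    (hτ3 : τ3 = β1 * β2 * β3 + β1 * β2 * β4 + β1 * β3 * β4 + β2 * β3 * β4)
    (hτ4 : τ4 = β1 * β2 * β3 * β4)
    (φ1 φ2 f : MvPolynomial (Fin 2) k)
    (hφ1 : φ1 = (X 0 - C α1) * (X 0 - C α2) * (X 0 - C α3) * (X 0 - C α4))
    (hφ2 : φ2 = (X 0 - C β1) * (X 0 - C β2) * (X 0 - C β3) * (X 0 - C β4))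
    (hf : f = X 1 ^ 4 - C 2 * (φ1 + φ2) * X 1 ^ 2 + (φ1 - φ2) ^ 2)
    (F : MvPolynomial (Fin 3) k)
    (hFhom : F.IsHomogeneous 6)
    (hFf : aeval ![(X 0 : MvPolynomial (Fin 2) k), X 1, 1] F = f)
    (Sing : Set (Projectivization k (Fin 3 → k)))
    (hSing : ∀ P : Projectivization k (Fin 3 → k),
      P ∈ Sing ↔ (eval P.rep F = 0 ∧
        eval P.rep (pderiv 0 F) = 0 ∧
        eval P.rep (pderiv 1 F) = 0 ∧
        eval P.rep (pderiv 2 F) = 0))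
    (h1 : k → k)
    (hh1 : ∀ x : k, h1 x = (σ1 - τ1) * x ^ 3 - (σ2 - τ2) * x ^ 2 + (σ3 - τ3) * x - (σ4 - τ4))
    -- resq = Res_x(h1, h1') where (σ1 = τ1 and) h1 is the quadratic
    -- -(σ2-τ2)x² + (σ3-τ3)x - (σ4-τ4), as a Sylvester determinant
    (resq : k)
    (hresq : resq = Matrix.det
      !![-(σ2 - τ2), σ3 - τ3, -(σ4 - τ4);
         -2 * (σ2 - τ2), σ3 - τ3, 0;
         0, -2 * (σ2 - τ2), σ3 - τ3])
    (hστ1 : σ1 = τ1) (hστ2 : σ2 ≠ τ2) (hrq : resq ≠ 0) :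
    ∃ ξ1 ξ2 : k, ξ1 ≠ ξ2
      ∧ (∀ x : k, h1 x = 0 ↔ x = ξ1 ∨ x = ξ2)
      ∧ (∀ ξ : k, Projectivization.mk k (![ξ, 0, 1] : Fin 3 → k)
            (by intro hc; simpa using congrFun hc 2) ∈ Sing
          ↔ ξ = ξ1 ∨ ξ = ξ2)
      ∧ Sing = {Projectivization.mk k (![0, 1, 0] : Fin 3 → k)
                  (by intro hc; simpa using congrFun hc 1),
                Projectivization.mk k (![1, 0, 0] : Fin 3 → k)
                  (by intro hc; simpa using congrFun hc 0),
                Projectivization.mk k (![ξ1, 0, 1] : Fin 3 → k)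
                  (by intro hc; simpa using congrFun hc 2),
                Projectivization.mk k (![ξ2, 0, 1] : Fin 3 → k)
                  (by intro hc; simpa using congrFun hc 2)}
      ∧ Sing.ncard = 4 := by
  have : NeZero (2 : k) := ⟨two_ne_zero_of_charP p hp⟩
  exact stmt_15_general _ _ _ _ _ _ _ _ (hdist.take (i := 4)) (hdist.drop (i := 4))
    _ _ _ _ _ _ _ _ hσ1 hσ2 hσ3 hσ4 hτ1 hτ2 hτ3 hτ4 _ _ _ hφ1 hφ2 hf F hFhom hFf
    Sing hSing h1 hh1 resq hresq hστ1 hστ2 hrq
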